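/- For each positive integer δ, the combinatorial logarithmic Severi degree Q^{d,δ} is quadratic in d for d sufficiently large: there exist rational numbers a, b, c and a natural number d₀ such that Q^{d,δ} = a·d² + b·d + c for all d ≥ d₀. -/

import Mathlib

open scoped Classical

/-- A quadruple `(a, b, w, i)` in the index set `X`: `a ≤ i < b`, `w ≥ 1`,
and the edge is not short. -/
def ValidX (x : ℕ × ℕ × ℕ × ℕ) : Prop :=
  x.1 ≤ x.2.2.2 ∧ x.2.2.2 < x.2.1 ∧ 1 ≤ x.2.2.1 ∧ ¬ (x.2.1 = x.1 + 1 ∧ x.2.2.1 = 1)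

/-- A finitely supported function `D : X → ℕ` encoding a long-edge graph with
a distribution: `D (a,b,w,i)` counts the edges with endpoints `a < b`, weight `w`,
assigned to the interval `[i, i+1]`. -/
def IsEncoding (D : (ℕ × ℕ × ℕ × ℕ) →₀ ℕ) : Prop :=
  ∀ x ∈ D.support, ValidX x

/-- The cogenus `δ(D) = ∑ D(a,b,w,i) ((b−a)w − 1)`. -/
def cogD (D : (ℕ × ℕ × ℕ × ℕ) →₀ ℕ) : ℕ :=
  ∑ x ∈ D.support, D x * ((x.2.1 - x.1) * x.2.2.1 - 1)

/-- `w_j(D)`: total weight over the interval `[j, j+1]`. -/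
def wjD (D : (ℕ × ℕ × ℕ × ℕ) →₀ ℕ) (j : ℕ) : ℕ :=
  ∑ x ∈ D.support.filter (fun x => x.1 ≤ j ∧ j < x.2.1), x.2.2.1 * D x

/-- `m_j(D)`: number of edges assigned to the interval `[j, j+1]`. -/
def mjD (D : (ℕ × ℕ × ℕ × ℕ) →₀ ℕ) (j : ℕ) : ℕ :=
  ∑ x ∈ D.support.filter (fun x => x.2.2.2 = j), D x

/-- `D` is allowable for `d`. -/
def AllowD (d : ℕ) (D : (ℕ × ℕ × ℕ × ℕ) →₀ ℕ) : Prop :=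
  (∀ x ∈ D.support, x.2.1 ≤ d + 1) ∧
    (∀ x ∈ D.support, x.2.1 = d + 1 → x.2.2.1 = 1) ∧
    ∀ j : ℕ, wjD D j ≤ j

/-- The multiplicity `μ(D) = ∏ w^{2·D(a,b,w,i)}`. -/
noncomputable def muD (D : (ℕ × ℕ × ℕ × ℕ) →₀ ℕ) : ℚ :=
  ∏ x ∈ D.support, (x.2.2.1 : ℚ) ^ (2 * D x)

/-- `α(D) = ∏ (D(a,b,w,i))!`. -/
noncomputable def alphaD (D : (ℕ × ℕ × ℕ × ℕ) →₀ ℕ) : ℚ :=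
  ∏ x ∈ D.support, (Nat.factorial (D x) : ℚ)

/-- `N^d(D) = (μ(D)/α(D)) ∏_{j∈ℕ} (j − w_j(D) + m_j(D))_{m_j(D)}` if `D` is allowable
for `d`, and `0` otherwise. -/
noncomputable def Nd (d : ℕ) (D : (ℕ × ℕ × ℕ × ℕ) →₀ ℕ) : ℚ :=
  if AllowD d D then
    (muD D / alphaD D) *
      ∏ᶠ j : ℕ, (((descPochhammer ℤ (mjD D j)).eval
        ((j : ℤ) - (wjD D j : ℤ) + (mjD D j : ℤ)) : ℤ) : ℚ)
  else 0

/-- The combinatorial Severi degree `N^{d,δ}`. -/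
noncomputable def NSev (d : ℕ) (δ : ℕ) : ℚ :=
  if δ = 0 then 1
  else ∑ᶠ (D : (ℕ × ℕ × ℕ × ℕ) →₀ ℕ) (_ : IsEncoding D ∧ cogD D = δ), Nd d D

/-- The combinatorial logarithmic Severi degree
`Q^{d,δ} = ∑ (−1)^{p−1}/p · N^{d,δ_1} ⋯ N^{d,δ_p}`, summed over ordered sequences of
positive integers with `δ_1 + ⋯ + δ_p = δ`. -/
noncomputable def QSev (d : ℕ) (δ : ℕ) : ℚ :=
  ∑ᶠ (l : List ℕ) (_ : l.sum = δ ∧ ∀ i ∈ l, 0 < i),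
    (-1 : ℚ) ^ (l.length - 1) / (l.length : ℚ) * (l.map (NSev d)).prod


abbrev Xq := ℕ × ℕ × ℕ × ℕ

abbrev Ser := MvPowerSeries Xq ℚ

def cx (x : Xq) : ℕ := (x.2.1 - x.1) * x.2.2.1 - 1

lemma cogD_eq (D : Xq →₀ ℕ) : cogD D = D.sum fun x n => n * cx x := rfl

lemma cogD_add (A B : Xq →₀ ℕ) : cogD (A + B) = cogD A + cogD B := by
  simp only [cogD_eq]
  exact Finsupp.sum_add_index' (by simp) (by intros; ring)

lemma wjD_eq (D : Xq →₀ ℕ) (j : ℕ) :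
    wjD D j = D.sum fun x n => if x.1 ≤ j ∧ j < x.2.1 then x.2.2.1 * n else 0 := by
  unfold wjD Finsupp.sum
  rw [Finset.sum_filter]

lemma mjD_eq (D : Xq →₀ ℕ) (j : ℕ) :
    mjD D j = D.sum fun x n => if x.2.2.2 = j then n else 0 := by
  unfold mjD Finsupp.sum
  rw [Finset.sum_filter]

lemma wjD_add (A B : Xq →₀ ℕ) (j : ℕ) : wjD (A + B) j = wjD A j + wjD B j := by
  simp only [wjD_eq]
  exact Finsupp.sum_add_index' (by simp) (by intros; split_ifs <;> ring)

lemma mjD_add (A B : Xq →₀ ℕ) (j : ℕ) : mjD (A + B) j = mjD A j + mjD B j := by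
  simp only [mjD_eq]
  exact Finsupp.sum_add_index' (by simp) (by intros; split_ifs <;> ring)

lemma muD_add (A B : Xq →₀ ℕ) : muD (A + B) = muD A * muD B := by
  have h : ∀ D : Xq →₀ ℕ, muD D = D.prod fun x n => (x.2.2.1 : ℚ) ^ (2 * n) := fun D => rfl
  simp only [h]
  exact Finsupp.prod_add_index' (by simp) (by intros; ring)

lemma alphaD_eq (D : Xq →₀ ℕ) : alphaD D = D.prod fun _ n => (Nat.factorial n : ℚ) := rfl

lemma alphaD_ne (D : Xq →₀ ℕ) : alphaD D ≠ 0 := by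
  unfold alphaD
  exact Finset.prod_ne_zero_iff.mpr (fun x _ => by positivity)

lemma alphaD_disj (A B : Xq →₀ ℕ) (h : Disjoint A.support B.support) :
    alphaD (A + B) = alphaD A * alphaD B := by
  simp only [alphaD_eq]
  exact Finsupp.prod_add_index_of_disjoint h _

lemma alphaD_single (A : Xq →₀ ℕ) (x : Xq) :
    alphaD (A + Finsupp.single x 1) = (A x + 1) * alphaD A := by
  simp only [alphaD_eq]
  rw [Finsupp.prod_of_support_subset _ (s := insert x A.support) _ _ (by simp),
    Finsupp.prod_of_support_subset A (s := insert x A.support) (by simp) _ (by simp),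
    ← Finset.mul_prod_erase _ _ (Finset.mem_insert_self x _),
    ← Finset.mul_prod_erase (insert x A.support) (fun y => (Nat.factorial (A y) : ℚ)) 
        (Finset.mem_insert_self x _)]
  · rw [← mul_assoc]
    congr 1
    · simp [Nat.factorial_succ]
    · apply Finset.prod_congr rfl
      intro y hy
      have : y ≠ x := (Finset.mem_erase.mp hy).1
      simp [Finsupp.single_apply, this.symm]
  · intro y hy
    have := Finsupp.support_add hy
    simp only [Finset.mem_union, Finset.mem_insert] at this ⊢
    rcases this with h | h
    · exact Or.inr h
    · left
      simpa using Finsupp.support_single_subset h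

lemma muD_single (x : Xq) : muD (Finsupp.single x 1) = (x.2.2.1 : ℚ) ^ 2 := by
  have h : ∀ D : Xq →₀ ℕ, muD D = D.prod fun x n => (x.2.2.1 : ℚ) ^ (2 * n) := fun D => rfl
  rw [h, Finsupp.prod_single_index] <;> simp

lemma wjD_single (x : Xq) (j : ℕ) :
    wjD (Finsupp.single x 1) j = if x.1 ≤ j ∧ j < x.2.1 then x.2.2.1 else 0 := by
  rw [wjD_eq, Finsupp.sum_single_index] <;> simp

lemma mjD_single (x : Xq) (j : ℕ) :
    mjD (Finsupp.single x 1) j = if x.2.2.2 = j then 1 else 0 := by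
  rw [mjD_eq, Finsupp.sum_single_index] <;> simp

lemma zeros : cogD 0 = 0 ∧ (∀ j, wjD 0 j = 0) ∧ (∀ j, mjD 0 j = 0) ∧ muD 0 = 1 ∧ alphaD 0 = 1 := by
  simp [cogD, wjD, mjD, muD, alphaD]

/-- rising factorial `(y+m)_m` -/
noncomputable def rff (m : ℕ) (y : ℤ) : ℚ := (((descPochhammer ℤ m).eval (y + m) : ℤ) : ℚ)

lemma rff_zero (y : ℤ) : rff 0 y = 1 := by simp [rff]

lemma rff_rec (m : ℕ) (y : ℤ) : rff (m+1) y = rff (m+1) (y-1) + (m+1) * rff m y := by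
  have h1 : (descPochhammer ℤ (m+1)).eval (y + (m+1)) = (y+(m+1)) * (descPochhammer ℤ m).eval (y+m) := by
    rw [descPochhammer_succ_left]; simp; left; congr 1; ring
  have h2 : (descPochhammer ℤ (m+1)).eval (y + m) = (descPochhammer ℤ m).eval (y+m) * (y) := by
    rw [descPochhammer_succ_right]; simp
  unfold rff
  have e : y - 1 + ((m+1 : ℕ) : ℤ) = y + m := by push_cast; ring
  have e2 : y + ((m+1 : ℕ) : ℤ) = y + (m + 1) := by push_cast; ring
  rw [e, e2, h1, h2]
  rw [Int.cast_mul, Int.cast_mul]; push_cast; ring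

/-- polynomial weight -/
noncomputable def FW (β : ℕ → ℤ) (D : Xq →₀ ℕ) : ℚ :=
  muD D / alphaD D * ∏ᶠ j : ℕ, rff (mjD D j) (β j - wjD D j)

lemma mjD_zero_of (D : Xq →₀ ℕ) (j : ℕ) (h : ∀ x ∈ D.support, x.2.2.2 ≠ j) : mjD D j = 0 := by
  unfold mjD
  apply Finset.sum_eq_zero
  intro x hx
  rw [Finset.mem_filter] at hx
  exact absurd hx.2 (h x hx.1)

lemma FW_eq (β : ℕ → ℤ) (D : Xq →₀ ℕ) (T : Finset ℕ) (hT : ∀ x ∈ D.support, x.2.2.2 ∈ T) :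
    FW β D = muD D / alphaD D * ∏ j ∈ T, rff (mjD D j) (β j - wjD D j) := by
  unfold FW
  rw [finprod_eq_prod_of_mulSupport_subset]
  intro j hj
  by_contra hjT
  apply hj
  have : mjD D j = 0 := mjD_zero_of D j (fun x hx h => hjT (by rw [← h]; exact hT x hx))
  simp only [this, rff_zero]

lemma FW_congr (β γ : ℕ → ℤ) (D : Xq →₀ ℕ) (h : ∀ x ∈ D.support, β x.2.2.2 = γ x.2.2.2) :
    FW β D = FW γ D := by
  rw [FW_eq β D (D.support.image (fun x => x.2.2.2)) (fun x hx => Finset.mem_image_of_mem _ hx),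
    FW_eq γ D (D.support.image (fun x => x.2.2.2)) (fun x hx => Finset.mem_image_of_mem _ hx)]
  congr 1
  apply Finset.prod_congr rfl
  intro j hj
  obtain ⟨x, hx, rfl⟩ := Finset.mem_image.mp hj
  rw [h x hx]

lemma FW_zero (β : ℕ → ℤ) : FW β 0 = 1 := by
  rw [FW_eq β 0 ∅ (by simp)]
  simp [zeros]

open MvPowerSeries in
lemma ser_ext {φ ψ : Ser} (h : ∀ D, coeff D φ = coeff D ψ) : φ = ψ := MvPowerSeries.ext h

noncomputable def opE (φ : Ser) : Ser := fun D => (cogD D : ℚ) * MvPowerSeries.coeff D φ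

lemma coeff_opE (φ : Ser) (D : Xq →₀ ℕ) :
    MvPowerSeries.coeff D (opE φ) = (cogD D : ℚ) * MvPowerSeries.coeff D φ := rfl

lemma opE_mul (φ ψ : Ser) : opE (φ * ψ) = opE φ * ψ + φ * opE ψ := by
  apply ser_ext
  intro D
  rw [coeff_opE, map_add, MvPowerSeries.coeff_mul, MvPowerSeries.coeff_mul,
    MvPowerSeries.coeff_mul, Finset.mul_sum, ← Finset.sum_add_distrib]
  apply Finset.sum_congr rfl
  intro p hp
  rw [Finset.HasAntidiagonal.mem_antidiagonal] at hp
  rw [← hp, cogD_add, coeff_opE, coeff_opE]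
  push_cast; ring

lemma opE_sub (φ ψ : Ser) : opE (φ - ψ) = opE φ - opE ψ := by
  apply ser_ext
  intro D
  simp only [coeff_opE, map_sub]; ring

noncomputable def opG (φ : Ser) : Ser := opE φ * φ⁻¹

def one0 (φ : Ser) : Prop := MvPowerSeries.coeff 0 φ = 1

lemma one0.inv {φ : Ser} (h : one0 φ) : φ * φ⁻¹ = 1 := by
  apply MvPowerSeries.mul_inv_cancel
  rw [← MvPowerSeries.coeff_zero_eq_constantCoeff_apply, h]
  exact one_ne_zero

lemma one0.mul {φ ψ : Ser} (h : one0 φ) (h' : one0 ψ) : one0 (φ * ψ) := by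
  unfold one0 at *
  rw [MvPowerSeries.coeff_zero_eq_constantCoeff_apply] at *
  rw [map_mul, h, h', one_mul]

lemma opG_mul_self {φ : Ser} (h : one0 φ) : opG φ * φ = opE φ := by
  unfold opG
  linear_combination (opE φ) * h.inv

lemma opG_unique {φ g : Ser} (h : one0 φ) (hg : g * φ = opE φ) : g = opG φ := by
  unfold opG
  linear_combination (-g) * h.inv + φ⁻¹ * hg

lemma opG_mul {φ ψ : Ser} (h : one0 φ) (h' : one0 ψ) : opG (φ * ψ) = opG φ + opG ψ := by
  symm
  apply opG_unique (h.mul h')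
  rw [opE_mul]
  linear_combination ψ * opG_mul_self h + φ * opG_mul_self h'

/-- restriction to graphs supported in `S` -/
noncomputable def opR (S : Set Xq) (φ : Ser) : Ser :=
  fun D => if (D.support : Set Xq) ⊆ S then MvPowerSeries.coeff D φ else 0

lemma coeff_opR (S : Set Xq) (φ : Ser) (D : Xq →₀ ℕ) : MvPowerSeries.coeff D (opR S φ) =
    if (D.support : Set Xq) ⊆ S then MvPowerSeries.coeff D φ else 0 := rfl

lemma supp_add (A B : Xq →₀ ℕ) (S : Set Xq) :
    ((A + B).support : Set Xq) ⊆ S ↔ (A.support : Set Xq) ⊆ S ∧ (B.support : Set Xq) ⊆ S := by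
  constructor
  · intro h
    constructor
    · intro x hx
      apply h
      simp at hx ⊢
      omega
    · intro x hx
      apply h
      simp at hx ⊢
      omega
  · rintro ⟨h1, h2⟩ x hx
    by_cases hA : A x = 0
    · apply h2
      simp at hx ⊢
      omega
    · apply h1
      simpa using hA

lemma opR_mul (S : Set Xq) (φ ψ : Ser) : opR S (φ * ψ) = opR S φ * opR S ψ := by
  apply ser_ext
  intro D
  rw [coeff_opR, MvPowerSeries.coeff_mul, MvPowerSeries.coeff_mul]
  split_ifs with h
  · apply Finset.sum_congr rfl
    intro p hp
    rw [Finset.HasAntidiagonal.mem_antidiagonal] at hp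
    rw [← hp, supp_add] at h
    rw [coeff_opR, coeff_opR, if_pos h.1, if_pos h.2]
  · symm
    apply Finset.sum_eq_zero
    intro p hp
    rw [Finset.HasAntidiagonal.mem_antidiagonal] at hp
    rw [← hp, supp_add] at h
    rw [coeff_opR, coeff_opR]
    by_cases h1 : (p.1.support : Set Xq) ⊆ S
    · rw [if_neg (fun h2 => h ⟨h1, h2⟩), mul_zero]
    · rw [if_neg h1, zero_mul]

lemma opR_opE (S : Set Xq) (φ : Ser) : opR S (opE φ) = opE (opR S φ) := by
  apply ser_ext
  intro D
  simp only [coeff_opR, coeff_opE]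
  split_ifs <;> simp

lemma opR_one0 (S : Set Xq) {φ : Ser} (h : one0 φ) : one0 (opR S φ) := by
  unfold one0 at *
  rw [coeff_opR]; simpa using h

lemma opR_opG (S : Set Xq) {φ : Ser} (h : one0 φ) : opR S (opG φ) = opG (opR S φ) := by
  apply opG_unique (opR_one0 S h)
  rw [← opR_mul, opG_mul_self h, opR_opE]

/-- agreement below `D` -/
lemma vanish_mul (D : Xq →₀ ℕ) (θ χ : Ser) (h : ∀ A ≤ D, MvPowerSeries.coeff A θ = 0) :
    ∀ A ≤ D, MvPowerSeries.coeff A (θ * χ) = 0 := by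
  intro A hA
  rw [MvPowerSeries.coeff_mul]
  apply Finset.sum_eq_zero
  intro p hp
  rw [Finset.HasAntidiagonal.mem_antidiagonal] at hp
  rw [h p.1 (le_trans (by rw [← hp]; exact le_self_add) hA), zero_mul]

lemma opG_congr (D : Xq →₀ ℕ) (φ ψ : Ser) (h1 : one0 φ) (h2 : one0 ψ)
    (h : ∀ A ≤ D, MvPowerSeries.coeff A φ = MvPowerSeries.coeff A ψ) :
    MvPowerSeries.coeff D (opG φ) = MvPowerSeries.coeff D (opG ψ) := by
  have key : opG φ - opG ψ = opE (φ - ψ) * φ⁻¹ - (φ - ψ) * (φ⁻¹ * opG ψ) := by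
    rw [opE_sub]
    have := opG_mul_self h2
    have h3 := h1.inv
    unfold opG at *
    linear_combination (opE ψ * ψ⁻¹) * h3 - φ⁻¹ * this 
  have e1 : MvPowerSeries.coeff D (opE (φ - ψ) * φ⁻¹) = 0 := by
    apply vanish_mul D _ _ _ D le_rfl
    intro A hA
    rw [coeff_opE, map_sub, h A hA, sub_self, mul_zero]
  have e2 : MvPowerSeries.coeff D ((φ - ψ) * (φ⁻¹ * opG ψ)) = 0 := by
    apply vanish_mul D _ _ _ D le_rfl
    intro A hA
    rw [map_sub, h A hA, sub_self]
  have := congrArg (MvPowerSeries.coeff D) key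
  rw [map_sub, map_sub, e1, e2] at this
  linarith

/-- pullback along an injection -/
noncomputable def opP (s : Xq → Xq) (φ : Ser) : Ser :=
  fun D => MvPowerSeries.coeff (D.mapDomain s) φ

lemma coeff_opP (s : Xq → Xq) (φ : Ser) (D : Xq →₀ ℕ) : MvPowerSeries.coeff D (opP s φ) =
    MvPowerSeries.coeff (D.mapDomain s) φ := rfl

lemma opP_mul (s : Xq → Xq) (hs : Function.Injective s) (φ ψ : Ser) :
    opP s (φ * ψ) = opP s φ * opP s ψ := by
  apply ser_ext
  intro D
  rw [coeff_opP, MvPowerSeries.coeff_mul, MvPowerSeries.coeff_mul]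
  symm
  have inv : ∀ A : Xq →₀ ℕ, A ≤ D.mapDomain s → (A.comapDomain s hs.injOn).mapDomain s = A := by
    intro A hA
    apply Finsupp.mapDomain_comapDomain s hs
    intro x hx
    by_contra hx'
    have h0 : D.mapDomain s x = 0 := Finsupp.mapDomain_of_notMem_range _ _ hx'
    have := hA x
    simp at hx
    omega
  refine Finset.sum_bij' (fun p _ => (p.1.mapDomain s, p.2.mapDomain s))
    (fun p _ => (p.1.comapDomain s hs.injOn, p.2.comapDomain s hs.injOn)) ?_ ?_ ?_ ?_ ?_
  · intro p hp
    rw [Finset.HasAntidiagonal.mem_antidiagonal] at hp ⊢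
    rw [← hp, Finsupp.mapDomain_add]
  · intro p hp
    rw [Finset.HasAntidiagonal.mem_antidiagonal] at hp ⊢
    apply Finsupp.mapDomain_injective hs
    simp only [Finsupp.mapDomain_add]
    rw [inv _ (by rw [← hp]; exact le_self_add), inv _ (by rw [← hp]; exact le_add_self), hp]
  · intro p hp
    ext1 <;> exact Finsupp.comapDomain_mapDomain _ hs _
  · intro p hp
    rw [Finset.HasAntidiagonal.mem_antidiagonal] at hp 
    ext1
    · exact inv _ (by rw [← hp]; exact le_self_add)
    · exact inv _ (by rw [← hp]; exact le_add_self)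
  · intro p hp
    rfl

lemma opP_opG (s : Xq → Xq) (hs : Function.Injective s) (hc : ∀ D, cogD (D.mapDomain s) = cogD D)
    {φ : Ser} (h : one0 φ) : one0 (opP s φ) ∧ opP s (opG φ) = opG (opP s φ) := by
  have h' : one0 (opP s φ) := by
    unfold one0 at *
    rw [coeff_opP]; simpa using h
  refine ⟨h', opG_unique h' ?_⟩
  rw [← opP_mul s hs, opG_mul_self h]
  apply ser_ext
  intro D
  rw [coeff_opP, coeff_opE, coeff_opE, coeff_opP, hc]

noncomputable def shb (x : Xq) : ℕ →₀ ℤ := Finsupp.indicator (Finset.Ico x.1 x.2.1) (fun _ _ => (x.2.2.1 : ℤ))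

lemma shb_apply (x : Xq) (j : ℕ) : shb x j = (wjD (Finsupp.single x 1) j : ℤ) := by
  rw [wjD_single]
  unfold shb
  rw [Finsupp.indicator_apply]
  simp only [Finset.mem_Ico, dite_eq_ite]
  split_ifs <;> simp

lemma term_eq (β : ℕ →₀ ℤ) (A : Xq →₀ ℕ) (x : Xq) (T : Finset ℕ) (hxT : x.2.2.2 ∈ T)
    (hT : ∀ y ∈ A.support, y.2.2.2 ∈ T) (D : Xq →₀ ℕ) (hD : D = A + Finsupp.single x 1) :
    (x.2.2.1 : ℚ)^2 * FW (β - shb x : ℕ →₀ ℤ) A = (D x : ℚ) * (muD D / alphaD D *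
      (rff (mjD D x.2.2.2 - 1) (β x.2.2.2 - wjD D x.2.2.2) *
        ∏ k ∈ T.erase x.2.2.2, rff (mjD D k) (β k - wjD D k))) := by
  rw [FW_eq _ A T hT, ← Finset.mul_prod_erase T _ hxT]
  have e1 : ∀ k, (β - shb x) k - (wjD A k : ℤ) = β k - wjD D k := by
    intro k
    rw [hD, wjD_add, Finsupp.sub_apply, shb_apply]; push_cast; ring
  have e2 : mjD A x.2.2.2 = mjD D x.2.2.2 - 1 := by
    rw [hD, mjD_add, mjD_single]; simp
  have e3 : ∏ k ∈ T.erase x.2.2.2, rff (mjD A k) ((β - shb x) k - (wjD A k : ℤ)) =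
      ∏ k ∈ T.erase x.2.2.2, rff (mjD D k) (β k - wjD D k) := by
    apply Finset.prod_congr rfl
    intro k hk
    have hk : k ≠ x.2.2.2 := (Finset.mem_erase.mp hk).1
    rw [e1]
    congr 1
    rw [hD, mjD_add, mjD_single, if_neg hk.symm, add_zero]
  rw [e3, e1, e2]
  have e4 : muD D = muD A * (x.2.2.1 : ℚ)^2 := by rw [hD, muD_add, muD_single]
  have e5 : alphaD D = (D x : ℚ) * alphaD A := by
    rw [hD, alphaD_single]; simp
  have e6 : (D x : ℚ) ≠ 0 := by
    rw [hD]; simp; positivity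
  have e7 := alphaD_ne A
  rw [e4, e5]
  field_simp

lemma FW_rec (β : ℕ →₀ ℤ) (j : ℕ) (D : Xq →₀ ℕ) (S : Finset Xq) (hS : D.support ⊆ S) :
    FW β D = FW (β - Finsupp.single j 1 : ℕ →₀ ℤ) D + ∑ x ∈ S.filter (fun x => x.2.2.2 = j),
      if Finsupp.single x 1 ≤ D then (x.2.2.1 : ℚ)^2 * FW (β - shb x : ℕ →₀ ℤ) (D - Finsupp.single x 1)
      else 0 := by
  set T := insert j (D.support.image (fun x => x.2.2.2)) with hTd
  have hjT : j ∈ T := Finset.mem_insert_self _ _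
  have hT : ∀ x ∈ D.support, x.2.2.2 ∈ T := fun x hx =>
    Finset.mem_insert_of_mem (Finset.mem_image_of_mem (fun x : Xq => x.2.2.2) hx)
  have hsum : ∑ x ∈ S.filter (fun x => x.2.2.2 = j), (D x : ℚ) = mjD D j := by
    unfold mjD
    push_cast
    symm
    apply Finset.sum_subset
    · exact Finset.filter_subset_filter _ hS
    · intro x hx hx'
      rw [Finset.mem_filter] at hx hx'
      have : x ∉ D.support := fun h => hx' ⟨h, hx.2⟩
      simpa using this
  have hterm : ∀ x ∈ S.filter (fun x => x.2.2.2 = j),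
      (if Finsupp.single x 1 ≤ D then (x.2.2.1 : ℚ)^2 *
        FW (β - shb x : ℕ →₀ ℤ) (D - Finsupp.single x 1) else 0) =
      (D x : ℚ) * (muD D / alphaD D * (rff (mjD D j - 1) (β j - wjD D j) *
        ∏ k ∈ T.erase j, rff (mjD D k) (β k - wjD D k))) := by
    intro x hx
    have hxj := (Finset.mem_filter.mp hx).2
    split_ifs with h
    · subst hxj
      refine term_eq β (D - Finsupp.single x 1) x T hjT ?_ D (tsub_add_cancel_of_le h).symm
      intro y hy
      apply hT
      simp at hy ⊢
      omega
    · have : D x = 0 := by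
        by_contra h0
        apply h
        rw [Finsupp.single_le_iff]
        omega
      rw [this]; simp
  rw [Finset.sum_congr rfl hterm, ← Finset.sum_mul, hsum, FW_eq _ D T hT, FW_eq _ D T hT,
    ← Finset.mul_prod_erase T _ hjT, 
    ← Finset.mul_prod_erase T _ hjT]
  have e3 : ∏ k ∈ T.erase j, rff (mjD D k) ((β - Finsupp.single j 1 : ℕ →₀ ℤ) k - (wjD D k : ℤ)) =
      ∏ k ∈ T.erase j, rff (mjD D k) (β k - wjD D k) := by
    apply Finset.prod_congr rfl
    intro k hk
    have hk : k ≠ j := (Finset.mem_erase.mp hk).1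
    simp [hk]
  rw [e3]
  have e4 : (β - Finsupp.single j 1 : ℕ →₀ ℤ) j - (wjD D j : ℤ) = β j - wjD D j - 1 := by
    simp; ring
  rw [e4]
  rcases hm : mjD D j with _ | m
  · simp [rff_zero]
  · rw [rff_rec, Nat.add_sub_cancel]; push_cast; ring

noncomputable def ZS (S : Finset Xq) (β : ℕ →₀ ℤ) : Ser :=
  fun D => if D.support ⊆ S then FW β D else 0

lemma coeff_ZS (S : Finset Xq) (β : ℕ →₀ ℤ) (D : Xq →₀ ℕ) :
    MvPowerSeries.coeff D (ZS S β) = if D.support ⊆ S then FW β D else 0 := rfl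

def SatRec (S : Finset Xq) (U : (ℕ →₀ ℤ) → Ser) : Prop :=
  ∀ β j, U β = U (β - Finsupp.single j 1) + ∑ x ∈ S.filter (fun x => x.2.2.2 = j),
    MvPowerSeries.monomial (Finsupp.single x 1) ((x.2.2.1 : ℚ)^2) * U (β - shb x)

lemma ZS_rec (S : Finset Xq) : SatRec S (ZS S) := by
  intro β j
  apply ser_ext
  intro D
  rw [map_add, map_sum, coeff_ZS, coeff_ZS]
  simp only [MvPowerSeries.coeff_monomial_mul, coeff_ZS]
  by_cases hD : D.support ⊆ S
  · rw [if_pos hD, if_pos hD, FW_rec β j D S hD]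
    congr 1
    apply Finset.sum_congr rfl
    intro x hx
    have hs : (D - Finsupp.single x 1).support ⊆ S := by
      refine subset_trans ?_ hD
      intro y hy
      simp at hy ⊢
      omega
    simp only [hs, if_true]
  · rw [if_neg hD, if_neg hD, Finset.sum_eq_zero, add_zero]
    intro x hx
    split_ifs with h1 h2
    · exfalso
      apply hD
      intro y hy
      by_cases hyx : y = x
      · rw [hyx]; exact (Finset.mem_filter.mp hx).1
      · apply h2
        simp [Ne.symm hyx] at hy ⊢
        exact hy
    · simp
    · rfl

lemma SatRec_unique (S : Finset Xq) (U : (ℕ →₀ ℤ) → Ser) (hU : SatRec S U) (h0 : U 0 = 0) :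
    ∀ β, U β = 0 := by
  have main : ∀ n : ℕ, ∀ D : Xq →₀ ℕ, D.degree < n → ∀ β, MvPowerSeries.coeff D (U β) = 0 := by
    intro n
    induction n with
    | zero => intro D h; omega
    | succ n ih =>
      intro D hD
      have step : ∀ β j, MvPowerSeries.coeff D (U β) =
          MvPowerSeries.coeff D (U (β - Finsupp.single j 1)) := by
        intro β j
        have := congrArg (MvPowerSeries.coeff D) (hU β j)
        rw [this, map_add, map_sum, Finset.sum_eq_zero, add_zero]
        intro x hx
        rw [MvPowerSeries.coeff_monomial_mul]
        split_ifs with h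
        · rw [ih, mul_zero]
          have := congrArg Finsupp.degree (tsub_add_cancel_of_le h)
          rw [map_add, Finsupp.degree_single] at this
          omega
        · rfl
      have step2 : ∀ j (c : ℤ) β, MvPowerSeries.coeff D (U (β + Finsupp.single j c)) =
          MvPowerSeries.coeff D (U β) := by
        intro j c
        induction c with
        | zero => simp
        | succ i ih => 
          intro β
          rw [step _ j, ← ih β]
          congr 2
          rw [Finsupp.single_add]; abel
        | pred i ih =>
          intro β
          rw [← ih β, step (β + Finsupp.single j (-(i:ℤ))) j]
          congr 2
          rw [Finsupp.single_sub]; abel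
      intro β
      induction β using Finsupp.induction with
      | zero => rw [h0]; simp
      | single_add a b f _ _ ih => rw [add_comm, step2, ih]
  intro β
  apply ser_ext
  intro D
  rw [main (D.degree + 1) D (by omega)]; simp

lemma ZS_mul (S : Finset Xq) (β γ : ℕ →₀ ℤ) : ZS S (β + γ) * ZS S 0 = ZS S β * ZS S γ := by
  have h := SatRec_unique S (fun β => ZS S (β + γ) * ZS S 0 - ZS S β * ZS S γ) ?_ ?_ β
  · exact sub_eq_zero.mp h
  · intro β j
    have h1 := ZS_rec S (β + γ) j
    have h2 := ZS_rec S β j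
    simp only [mul_sub, Finset.sum_sub_distrib, ← mul_assoc, ← Finset.sum_mul]
    have c1 : β - Finsupp.single j 1 + γ = β + γ - Finsupp.single j 1 := by abel
    have c2 : ∀ x, β - shb x + γ = β + γ - shb x := fun x => by abel
    simp only [c1, c2]
    linear_combination (ZS S 0) * h1 - (ZS S γ) * h2
  · simp only [zero_add]; ring

lemma ZS_one0 (S : Finset Xq) (β : ℕ →₀ ℤ) : one0 (ZS S β) := by
  unfold one0
  rw [coeff_ZS, if_pos (by simp), FW_zero]

noncomputable def Zf : Ser := fun D =>
  if IsEncoding D ∧ ∀ j, wjD D j ≤ j then FW (fun j => (j : ℤ)) D else 0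

lemma coeff_Zf (D : Xq →₀ ℕ) : MvPowerSeries.coeff D Zf =
  if IsEncoding D ∧ ∀ j, wjD D j ≤ j then FW (fun j => (j : ℤ)) D else 0 := rfl

lemma Zf_one0 : one0 Zf := by
  unfold one0
  rw [coeff_Zf, if_pos, FW_zero]
  refine ⟨?_, ?_⟩
  · intro x hx; simp at hx
  · intro j; rw [zeros.2.1]; omega

lemma wjD_zero_of (D : Xq →₀ ℕ) (j : ℕ) (h : ∀ x ∈ D.support, ¬ (x.1 ≤ j ∧ j < x.2.1)) :
    wjD D j = 0 := by
  unfold wjD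
  apply Finset.sum_eq_zero
  intro x hx
  rw [Finset.mem_filter] at hx
  exact absurd hx.2 (h x hx.1)

def SetA (c : ℕ) : Set Xq := {x | ValidX x ∧ x.2.1 ≤ c}
def SetB (c : ℕ) : Set Xq := {x | ValidX x ∧ c ≤ x.1}

lemma setAB {c : ℕ} {x : Xq} (h1 : x ∈ SetA c) (h2 : x ∈ SetB c) : False := by
  obtain ⟨h, h3⟩ := h1
  obtain ⟨_, h4⟩ := h2
  obtain ⟨h5, h6, _⟩ := h
  omega

lemma Zf_fact (c : ℕ) (A B : Xq →₀ ℕ) (hA : (A.support : Set Xq) ⊆ SetA c)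
    (hB : (B.support : Set Xq) ⊆ SetB c) :
    MvPowerSeries.coeff (A + B) Zf = MvPowerSeries.coeff A Zf * MvPowerSeries.coeff B Zf := by
  have eA : IsEncoding A := fun x hx => (hA hx).1
  have eB : IsEncoding B := fun x hx => (hB hx).1
  have eAB : IsEncoding (A + B) := by
    intro x hx
    rcases Finset.mem_union.mp (Finsupp.support_add hx) with h | h
    · exact eA x h
    · exact eB x h
  have wA : ∀ j, c ≤ j → wjD A j = 0 := by
    intro j hj
    apply wjD_zero_of
    intro x hx h
    have := (hA hx).2
    omega
  have wB : ∀ j, j < c → wjD B j = 0 := by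
    intro j hj
    apply wjD_zero_of
    intro x hx h
    have := (hB hx).2
    omega
  have mA : ∀ j, c ≤ j → mjD A j = 0 := by
    intro j hj
    apply mjD_zero_of
    intro x hx h
    have := (hA hx).2
    have := (hA hx).1.2.1
    omega
  have mB : ∀ j, j < c → mjD B j = 0 := by
    intro j hj
    apply mjD_zero_of
    intro x hx h
    have := (hB hx).2
    have := (hB hx).1.1
    omega
  have hw : (∀ j, wjD (A + B) j ≤ j) ↔ (∀ j, wjD A j ≤ j) ∧ (∀ j, wjD B j ≤ j) := by
    constructor
    · intro h
      refine ⟨fun j => ?_, fun j => ?_⟩ <;>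
      · have := h j
        rw [wjD_add] at this
        omega
    · rintro ⟨h1, h2⟩ j
      rw [wjD_add]
      have := h1 j
      have := h2 j
      by_cases hj : j < c
      · rw [wB j hj]; omega
      · rw [wA j (by omega)]; omega
  have hFW : FW (fun j => (j : ℤ)) (A + B) = FW (fun j => (j : ℤ)) A * FW (fun j => (j : ℤ)) B := by
    set T := (A.support ∪ B.support).image (fun x => x.2.2.2) with hT
    rw [FW_eq _ (A + B) T, FW_eq _ A T, FW_eq _ B T, muD_add, alphaD_disj]
    · have : ∏ j ∈ T, rff (mjD (A + B) j) ((j : ℤ) - (wjD (A + B) j : ℤ)) =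
          ∏ j ∈ T, (rff (mjD A j) ((j : ℤ) - (wjD A j : ℤ)) * rff (mjD B j) ((j : ℤ) - (wjD B j : ℤ))) := by
        apply Finset.prod_congr rfl
        intro j _
        rw [mjD_add, wjD_add]
        by_cases hj : j < c
        · rw [wB j hj, mB j hj, rff_zero]; simp
        · rw [wA j (by omega), mA j (by omega), rff_zero]; simp
      rw [this, Finset.prod_mul_distrib]
      have := alphaD_ne A
      have := alphaD_ne B
      field_simp
    · rw [Finset.disjoint_left]
      intro x h1 h2
      exact setAB (hA h1) (hB h2)
    · intro x hx
      exact Finset.mem_image_of_mem (fun x : Xq => x.2.2.2) (Finset.mem_union_right _ hx)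
    · intro x hx
      exact Finset.mem_image_of_mem (fun x : Xq => x.2.2.2) (Finset.mem_union_left _ hx)
    · intro x hx
      exact Finset.mem_image_of_mem (fun x : Xq => x.2.2.2) (Finsupp.support_add hx)
  simp only [coeff_Zf, eA, eB, eAB, true_and, hw, hFW]
  by_cases h1 : ∀ j, wjD A j ≤ j <;> by_cases h2 : ∀ j, wjD B j ≤ j <;> simp [h1, h2]

lemma Zf_opR (c : ℕ) : opR (SetA c ∪ SetB c) Zf = opR (SetA c) Zf * opR (SetB c) Zf := by
  apply ser_ext
  intro D
  rw [MvPowerSeries.coeff_mul]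
  simp only [coeff_opR]
  by_cases hD : (D.support : Set Xq) ⊆ SetA c ∪ SetB c
  · rw [if_pos hD]
    have e : D.filter (· ∈ SetA c) + D.filter (fun x => ¬ x ∈ SetA c) = D :=
      Finsupp.filter_add_filter_not D _
    have h1 : ((D.filter (· ∈ SetA c)).support : Set Xq) ⊆ SetA c := by
      intro x hx
      rw [Finset.mem_coe, Finsupp.support_filter, Finset.mem_filter] at hx
      exact hx.2
    have h2 : ((D.filter (fun x => ¬ x ∈ SetA c)).support : Set Xq) ⊆ SetB c := by
      intro x hx
      rw [Finset.mem_coe, Finsupp.support_filter, Finset.mem_filter] at hx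
      exact (hD hx.1).resolve_left hx.2
    rw [Finset.sum_eq_single (D.filter (· ∈ SetA c), D.filter (fun x => ¬ x ∈ SetA c))]
    · rw [if_pos h1, if_pos h2, ← Zf_fact c _ _ h1 h2, e]
    · intro p hp hne
      rw [Finset.HasAntidiagonal.mem_antidiagonal] at hp
      by_cases g1 : (p.1.support : Set Xq) ⊆ SetA c
      · by_cases g2 : (p.2.support : Set Xq) ⊆ SetB c
        · exfalso
          apply hne
          have a1 : ∀ x, x ∈ SetA c → p.2 x = 0 := by
            intro x hx
            by_contra h
            exact setAB hx (g2 (Finsupp.mem_support_iff.mpr h))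
          have a2 : ∀ x, x ∉ SetA c → p.1 x = 0 := by
            intro x hx
            by_contra h
            exact hx (g1 (Finsupp.mem_support_iff.mpr h))
          ext x
          · rw [← hp]
            by_cases hx : x ∈ SetA c
            · simp [hx, a1 x hx]
            · simp [hx, a2 x hx]
          · rw [← hp]
            by_cases hx : x ∈ SetA c
            · simp [hx, a1 x hx]
            · simp [hx, a2 x hx]
        · rw [if_neg g2, mul_zero]
      · rw [if_neg g1, zero_mul]
    · intro h
      exact absurd (Finset.HasAntidiagonal.mem_antidiagonal.mpr e) h
  · rw [if_neg hD]
    symm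
    apply Finset.sum_eq_zero
    intro p hp
    rw [Finset.HasAntidiagonal.mem_antidiagonal] at hp
    by_cases g1 : (p.1.support : Set Xq) ⊆ SetA c
    · rw [if_neg (c := (p.2.support : Set Xq) ⊆ SetB c), mul_zero]
      intro g2
      apply hD
      rw [← hp, supp_add]
      exact ⟨g1.trans Set.subset_union_left, g2.trans Set.subset_union_right⟩
    · rw [if_neg g1, zero_mul]

lemma g_sep (D : Xq →₀ ℕ) (hD : IsEncoding D) (c : ℕ) (h : ∀ x ∈ D.support, x.2.1 ≤ c ∨ c ≤ x.1)
    (h1 : ∃ x ∈ D.support, x.2.1 ≤ c) (h2 : ∃ x ∈ D.support, c ≤ x.1) :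
    MvPowerSeries.coeff D (opG Zf) = 0 := by
  have hs : (D.support : Set Xq) ⊆ SetA c ∪ SetB c := by
    intro x hx
    rcases h x hx with h | h
    · exact Or.inl ⟨hD x hx, h⟩
    · exact Or.inr ⟨hD x hx, h⟩
  have e : MvPowerSeries.coeff D (opG Zf) =
      MvPowerSeries.coeff D (opR (SetA c ∪ SetB c) (opG Zf)) := by
    rw [coeff_opR, if_pos hs]
  rw [e, opR_opG _ Zf_one0, Zf_opR, opG_mul (opR_one0 _ Zf_one0) (opR_one0 _ Zf_one0),
    ← opR_opG _ Zf_one0, ← opR_opG _ Zf_one0, map_add, coeff_opR, coeff_opR, if_neg, if_neg, add_zero]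
  · intro hB
    obtain ⟨x, hx, hx'⟩ := h1
    exact setAB ⟨hD x hx, hx'⟩ (hB hx)
  · intro hA
    obtain ⟨x, hx, hx'⟩ := h2
    exact setAB (hA hx) ⟨hD x hx, hx'⟩

lemma g_span (D : Xq →₀ ℕ) (hD : IsEncoding D) (hg : MvPowerSeries.coeff D (opG Zf) ≠ 0)
    (x y : Xq) (hx : x ∈ D.support) (hy : y ∈ D.support) : y.2.1 ≤ x.1 + cogD D + 1 := by
  have hsub : Finset.Ioo x.1 y.2.1 ⊆ D.support.biUnion (fun z => Finset.Ioo z.1 z.2.1) := by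
    intro c hc
    rw [Finset.mem_Ioo] at hc
    by_contra hcon
    have hz : ∀ z ∈ D.support, z.2.1 ≤ c ∨ c ≤ z.1 := by
      intro z hz
      by_contra h
      apply hcon
      rw [Finset.mem_biUnion]
      refine ⟨z, hz, ?_⟩
      rw [Finset.mem_Ioo]; omega
    apply hg
    refine g_sep D hD c hz ⟨x, hx, ?_⟩ ⟨y, hy, ?_⟩
    · have := hz x hx; omega
    · have := hz y hy; omega
  have h1 := (Finset.card_le_card hsub).trans Finset.card_biUnion_le
  have h2 : ∑ z ∈ D.support, (Finset.Ioo z.1 z.2.1).card ≤ cogD D := by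
    unfold cogD
    apply Finset.sum_le_sum
    intro z hz
    have hv := (hD z hz).2.2.1
    have hn : 1 ≤ D z := Nat.one_le_iff_ne_zero.mpr (Finsupp.mem_support_iff.mp hz)
    rw [Nat.card_Ioo]
    calc z.2.1 - z.1 - 1 ≤ (z.2.1 - z.1) * z.2.2.1 - 1 := Nat.sub_le_sub_right (Nat.le_mul_of_pos_right _ hv) 1
      _ ≤ _ := Nat.le_mul_of_pos_left _ hn
  rw [Nat.card_Ioo] at h1
  omega

def sk (k : ℕ) (x : Xq) : Xq := (x.1 + k, x.2.1 + k, x.2.2.1, x.2.2.2 + k)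

lemma sk_inj (k : ℕ) : Function.Injective (sk k) := by
  rintro ⟨a, b, w, i⟩ ⟨a', b', w', i'⟩ h
  simp only [sk, Prod.mk.injEq] at h ⊢
  omega

lemma sk_supp (k : ℕ) (D : Xq →₀ ℕ) : (D.mapDomain (sk k)).support = D.support.image (sk k) :=
  Finsupp.mapDomain_support_of_injective (sk_inj k) D

lemma sk_valid (k : ℕ) (x : Xq) : ValidX (sk k x) ↔ ValidX x := by
  simp only [ValidX, sk]
  constructor <;> (rintro ⟨h1, h2, h3, h4⟩; refine ⟨by omega, by omega, h3, by omega⟩)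

lemma sk_enc (k : ℕ) (D : Xq →₀ ℕ) : IsEncoding (D.mapDomain (sk k)) ↔ IsEncoding D := by
  unfold IsEncoding
  rw [sk_supp]
  simp only [Finset.forall_mem_image, sk_valid]

lemma sk_cog (k : ℕ) (D : Xq →₀ ℕ) : cogD (D.mapDomain (sk k)) = cogD D := by
  rw [cogD_eq, cogD_eq, Finsupp.sum_mapDomain_index_inj (sk_inj k)]
  unfold Finsupp.sum
  apply Finset.sum_congr rfl
  intro x _
  simp only [cx, sk, Nat.add_sub_add_right]

lemma sk_w (k : ℕ) (D : Xq →₀ ℕ) (j : ℕ) : wjD (D.mapDomain (sk k)) (j + k) = wjD D j := by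
  rw [wjD_eq, wjD_eq, Finsupp.sum_mapDomain_index_inj (sk_inj k)]
  unfold Finsupp.sum
  apply Finset.sum_congr rfl
  intro x _
  simp only [sk, Nat.add_le_add_iff_right, Nat.add_lt_add_iff_right]

lemma sk_w0 (k : ℕ) (D : Xq →₀ ℕ) (j : ℕ) (h : j < k) : wjD (D.mapDomain (sk k)) j = 0 := by
  apply wjD_zero_of
  rw [sk_supp]
  simp only [Finset.forall_mem_image, sk]
  intro x _
  omega

lemma sk_m (k : ℕ) (D : Xq →₀ ℕ) (j : ℕ) : mjD (D.mapDomain (sk k)) (j + k) = mjD D j := by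
  rw [mjD_eq, mjD_eq, Finsupp.sum_mapDomain_index_inj (sk_inj k)]
  unfold Finsupp.sum
  apply Finset.sum_congr rfl
  intro x _
  simp only [sk, Nat.add_right_cancel_iff]

lemma sk_mu (k : ℕ) (D : Xq →₀ ℕ) : muD (D.mapDomain (sk k)) = muD D := by
  have h : ∀ D : Xq →₀ ℕ, muD D = D.prod fun x n => (x.2.2.1 : ℚ) ^ (2 * n) := fun D => rfl
  rw [h, h, Finsupp.prod_mapDomain_index_inj (sk_inj k)]
  rfl

lemma sk_alpha (k : ℕ) (D : Xq →₀ ℕ) : alphaD (D.mapDomain (sk k)) = alphaD D := by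
  rw [alphaD_eq, alphaD_eq, Finsupp.prod_mapDomain_index_inj (sk_inj k)]

lemma sk_FW (k : ℕ) (D : Xq →₀ ℕ) :
    FW (fun j => (j : ℤ)) (D.mapDomain (sk k)) = FW (fun j => (j : ℤ) + k) D := by
  rw [FW_eq _ D (D.support.image (fun x => x.2.2.2))
      (fun x hx => Finset.mem_image_of_mem (fun x : Xq => x.2.2.2) hx),
    FW_eq _ (D.mapDomain (sk k)) ((D.support.image (fun x => x.2.2.2)).image (· + k)), sk_mu, sk_alpha,
    Finset.prod_image (by intro a _ b _ h; simpa using h)]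
  · congr 1
    apply Finset.prod_congr rfl
    intro j _
    rw [sk_w, sk_m]; push_cast; rfl
  · rw [sk_supp]
    simp only [Finset.forall_mem_image]
    intro x hx
    exact Finset.mem_image_of_mem (· + k) (Finset.mem_image_of_mem (fun x : Xq => x.2.2.2) hx)

noncomputable def bk (J : ℕ) (k : ℕ) : ℕ →₀ ℤ := Finsupp.indicator (Finset.range J) (fun j _ => (j : ℤ) + k)
noncomputable def onesb (J : ℕ) : ℕ →₀ ℤ := Finsupp.indicator (Finset.range J) (fun _ _ => (1 : ℤ))

lemma bk_succ (J k : ℕ) : bk J (k + 1) = bk J k + onesb J := by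
  ext j
  simp only [bk, onesb, Finsupp.add_apply, Finsupp.indicator_apply]
  split_ifs <;> push_cast <;> ring

lemma g_affine (D : Xq →₀ ℕ) (hD : IsEncoding D) (hw : ∀ j, wjD D j ≤ j) :
    ∃ u v : ℚ, ∀ k : ℕ, MvPowerSeries.coeff (D.mapDomain (sk k)) (opG Zf) = u + k * v := by
  set S := D.support with hS
  obtain ⟨J, hJ⟩ : ∃ J, ∀ x ∈ S, x.2.2.2 < J := by
    refine ⟨S.sup (fun x => x.2.2.2) + 1, fun x hx => ?_⟩
    have := Finset.le_sup (f := fun x : Xq => x.2.2.2) hx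
    exact Nat.lt_succ_of_le this
  have key : ∀ k : ℕ, MvPowerSeries.coeff (D.mapDomain (sk k)) (opG Zf) =
      MvPowerSeries.coeff D (opG (ZS S (bk J k))) := by
    intro k
    obtain ⟨h1, h2⟩ := opP_opG (sk k) (sk_inj k) (sk_cog k) Zf_one0
    rw [← coeff_opP, h2]
    apply opG_congr D _ _ h1 (ZS_one0 _ _)
    intro A hA
    have hAS : A.support ⊆ S := Finsupp.support_mono hA
    have hAe : IsEncoding A := fun x hx => hD x (hAS hx)
    have hwA : ∀ j, wjD A j ≤ j := by
      intro j
      have := hw j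
      rw [← tsub_add_cancel_of_le hA, wjD_add] at this
      omega
    rw [coeff_opP, coeff_Zf, coeff_ZS, if_pos hAS, if_pos, sk_FW]
    · apply FW_congr
      intro x hx
      have := hJ x (hAS hx)
      simp [bk, Finsupp.indicator_apply, this]
    · refine ⟨(sk_enc k A).mpr hAe, ?_⟩
      intro j
      by_cases hj : j < k
      · rw [sk_w0 k A j hj]; omega
      · obtain ⟨i, rfl⟩ := Nat.exists_eq_add_of_le' (not_lt.mp hj)
        rw [sk_w]
        have := hwA i
        omega
  have step : ∀ k : ℕ, MvPowerSeries.coeff D (opG (ZS S (bk J (k + 1)))) =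
      MvPowerSeries.coeff D (opG (ZS S (bk J k))) + (MvPowerSeries.coeff D (opG (ZS S (onesb J)))
        - MvPowerSeries.coeff D (opG (ZS S 0))) := by
    intro k
    have h := congrArg opG (ZS_mul S (bk J k) (onesb J))
    rw [opG_mul (ZS_one0 _ _) (ZS_one0 _ _), opG_mul (ZS_one0 _ _) (ZS_one0 _ _)] at h
    have := congrArg (MvPowerSeries.coeff D) h
    rw [map_add, map_add] at this
    rw [bk_succ]
    linarith
  refine ⟨MvPowerSeries.coeff D (opG (ZS S (bk J 0))), MvPowerSeries.coeff D (opG (ZS S (onesb J)))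
        - MvPowerSeries.coeff D (opG (ZS S 0)), ?_⟩
  intro k
  rw [key]
  induction k with
  | zero => simp
  | succ k ih => rw [step, ih]; push_cast; ring

open PowerSeries in
lemma list_pow (N : ℕ → ℚ) (p : ℕ) : ∀ n : ℕ, ∃ L : Finset (List ℕ),
    (∀ l, l ∈ L ↔ l.length = p ∧ l.sum = n ∧ ∀ i ∈ l, 0 < i) ∧
    ∑ l ∈ L, (l.map N).prod = coeff n ((PowerSeries.mk (fun n => if n = 0 then 0 else N n)) ^ p) := by
  induction p with
  | zero =>
    intro n
    by_cases hn : n = 0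
    · refine ⟨{[]}, ?_, ?_⟩
      · intro l
        rw [Finset.mem_singleton, List.length_eq_zero_iff]
        constructor
        · rintro rfl; simp [hn]
        · exact fun h => h.1
      · simp [hn]
    · refine ⟨∅, ?_, ?_⟩
      · intro l
        rw [List.length_eq_zero_iff]
        constructor
        · intro h; simp at h
        · rintro ⟨rfl, h, _⟩; simp at h; omega
      · simp [coeff_one, hn]
  | succ p ih =>
    intro n
    choose L hL hLs using ih
    refine ⟨((Finset.HasAntidiagonal.antidiagonal n).filter (fun q => q.1 ≠ 0)).biUnion
      (fun q => (L q.2).image (fun l => q.1 :: l)), ?_, ?_⟩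
    · intro l
      simp only [Finset.mem_biUnion, Finset.mem_filter, Finset.HasAntidiagonal.mem_antidiagonal, Finset.mem_image, hL]
      constructor
      · rintro ⟨q, ⟨hq, hq0⟩, l', ⟨h1, h2, h3⟩, rfl⟩
        refine ⟨by simp [h1], by simp [h2, hq], ?_⟩
        intro i hi
        rcases List.mem_cons.mp hi with h | h
        · omega
        · exact h3 i h
      · rintro ⟨h1, h2, h3⟩
        rcases l with _ | ⟨a, l⟩
        · simp at h1
        · refine ⟨(a, l.sum), ⟨by simpa using h2, ?_⟩, l, ⟨by simpa using h1, rfl, ?_⟩, rfl⟩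
          · have := h3 a (by simp); simp only; omega
          · intro i hi; exact h3 i (by simp [hi])
    · rw [Finset.sum_biUnion, pow_succ', coeff_mul]
      · rw [Finset.sum_filter]
        apply Finset.sum_congr rfl
        intro q hq
        rw [coeff_mk]
        by_cases h1 : q.1 = 0
        · simp [h1]
        · rw [if_pos h1, if_neg h1]
          rw [Finset.sum_image (by intro a _ b _ h; simpa using h), ← hLs, Finset.mul_sum]
          apply Finset.sum_congr rfl
          intro l _
          simp
      · intro q hq q' hq' hne
        rw [Function.onFun, Finset.disjoint_left]
        intro l h1 h2
        simp only [Finset.mem_image] at h1 h2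
        obtain ⟨l1, _, rfl⟩ := h1
        obtain ⟨l2, _, h⟩ := h2
        apply hne
        have ha : q'.1 = q.1 := (List.cons.inj h).1
        simp only [Finset.coe_filter, Set.mem_ofPred_eq, Finset.HasAntidiagonal.mem_antidiagonal] at hq hq'
        ext1
        · exact ha.symm
        · omega

open PowerSeries in
lemma Q_eq (d δ : ℕ) (hδ : 0 < δ) (g : PowerSeries ℚ)
    (hg : g * PowerSeries.mk (NSev d) = PowerSeries.X * (PowerSeries.derivative ℚ (PowerSeries.mk (NSev d)))) :
    (δ : ℚ) * QSev d δ = coeff δ g := by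
  set U : PowerSeries ℚ := PowerSeries.mk (fun n => if n = 0 then 0 else NSev d n) with hU
  have hN : PowerSeries.mk (NSev d) = 1 + U := by
    ext n
    rw [map_add, coeff_one, hU, coeff_mk, coeff_mk]
    split_ifs with h
    · simp [h, NSev]
    · simp
  have hUX : X ∣ U := by
    rw [X_dvd_iff]; simp [hU]
  choose L hL hLs using list_pow (NSev d)
  have hQ : QSev d δ = ∑ p ∈ Finset.Icc 1 δ, (-1 : ℚ)^(p-1) / p * coeff δ (U ^ p) := by
    unfold QSev
    have hB : ∀ l : List ℕ, (l.sum = δ ∧ ∀ i ∈ l, 0 < i) ↔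
        l ∈ (((Finset.Icc 1 δ).biUnion (fun p => L p δ) : Finset (List ℕ)) : Set (List ℕ)) := by
      intro l
      rw [Finset.mem_coe, Finset.mem_biUnion]
      constructor
      · rintro ⟨h1, h2⟩
        refine ⟨l.length, ?_, (hL _ _ l).mpr ⟨rfl, h1, h2⟩⟩
        rw [Finset.mem_Icc]
        constructor
        · rcases l with _ | ⟨a, l⟩
          · simp at h1; omega
          · simp
        · rw [← h1]
          exact List.length_le_sum_of_one_le l h2
      · rintro ⟨p, _, hp⟩
        exact ((hL _ _ l).mp hp).2
    simp only [hB]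
    rw [finsum_mem_coe_finset, Finset.sum_biUnion]
    · apply Finset.sum_congr rfl
      intro p hp
      rw [← hLs, Finset.mul_sum]
      apply Finset.sum_congr rfl
      intro l hl
      rw [((hL _ _ l).mp hl).1]
    · intro p _ q _ hne
      rw [Function.onFun, Finset.disjoint_left]
      intro l h1 h2
      exact hne (((hL _ _ l).mp h1).1.symm.trans ((hL _ _ l).mp h2).1)
  have hD : ∀ f : PowerSeries ℚ, coeff δ (X * derivative ℚ f) = δ * coeff δ f := by
    intro f
    obtain ⟨m, rfl⟩ : ∃ m, δ = m + 1 := ⟨δ - 1, by omega⟩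
    rw [coeff_succ_X_mul, coeff_derivative]; push_cast; ring
  have h1 : (δ : ℚ) * QSev d δ = coeff δ ((∑ p ∈ Finset.range δ, (-U)^p) * (X * derivative ℚ U)) := by
    rw [hQ, Finset.sum_mul, map_sum, Finset.mul_sum]
    symm
    refine Finset.sum_bij (fun p _ => p + 1) ?_ ?_ ?_ ?_
    · intro p hp
      rw [Finset.mem_range] at hp
      rw [Finset.mem_Icc]; omega
    · intro p _ q _ h; omega
    · intro q hq
      rw [Finset.mem_Icc] at hq
      exact ⟨q - 1, by rw [Finset.mem_range]; omega, by omega⟩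
    · intro p hp
      have e1 : X * derivative ℚ (U ^ (p + 1)) =
          C ((p : ℚ) + 1) * (U ^ p * (X * derivative ℚ U)) := by
        rw [Derivation.leibniz_pow]
        simp only [Nat.add_sub_cancel, smul_eq_mul, nsmul_eq_mul]
        simp
        ring
      have e2 := hD (U ^ (p + 1))
      rw [e1, coeff_C_mul] at e2
      have e3 : (-U) ^ p * (X * derivative ℚ U) = C ((-1 : ℚ) ^ p) * (U ^ p * (X * derivative ℚ U)) := by
        rw [neg_pow]; simp; ring
      rw [e3, coeff_C_mul, Nat.add_sub_cancel]
      have : (p : ℚ) + 1 ≠ 0 := by positivity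
      push_cast
      field_simp
      linear_combination e2
  have h2 : (∑ p ∈ Finset.range δ, (-U)^p) * (1 + U) = 1 - (-U)^δ := by
    have := geom_sum_mul_neg (-U) δ
    rw [sub_neg_eq_add] at this
    exact this
  have h3 : X * derivative ℚ U = g * (1 + U) := by
    rw [← hN, hg, hN, map_add]
    simp
  have h4 : coeff δ (g * (-U)^δ) = 0 := by
    have hg0 : X ∣ g := by
      rw [X_dvd_iff]
      have := congrArg constantCoeff h3
      rw [map_mul, map_mul, map_add, X_dvd_iff.mp hUX] at this
      simpa using this.symm
    have hd : X ^ (δ + 1) ∣ g * (-U)^δ := by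
      rw [pow_succ']
      exact mul_dvd_mul hg0 (pow_dvd_pow_of_dvd ((dvd_neg).mpr hUX) δ)
    exact X_pow_dvd_iff.mp hd δ (by omega)
  rw [h1, h3]
  have : (∑ p ∈ Finset.range δ, (-U)^p) * (g * (1+U)) = g - g * (-U)^δ := by
    linear_combination g * h2
  rw [this, map_sub, h4, sub_zero]

def Td (d : ℕ) : Set Xq := {x | ValidX x ∧ x.2.1 ≤ d + 1 ∧ (x.2.1 = d + 1 → x.2.2.1 = 1)}

lemma two_le (x : Xq) (hx : ValidX x) :
    2 ≤ (x.2.1 - x.1) * x.2.2.1 ∧ x.2.2.1 ≤ (x.2.1 - x.1) * x.2.2.1 := by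
  obtain ⟨h1, h2, h3, h4⟩ := hx
  have hL : 1 ≤ x.2.1 - x.1 := by omega
  refine ⟨?_, Nat.le_mul_of_pos_left _ hL⟩
  by_cases h : x.2.1 - x.1 = 1
  · rw [h]
    have : x.2.2.1 ≠ 1 := fun h' => h4 ⟨by omega, h'⟩
    omega
  · have : 2 ≤ x.2.1 - x.1 := by omega
    nlinarith

lemma cog_term (D : Xq →₀ ℕ) (x : Xq) (hx : x ∈ D.support) :
    D x * ((x.2.1 - x.1) * x.2.2.1 - 1) ≤ cogD D := by
  unfold cogD
  exact Finset.single_le_sum (f := fun x : Xq => D x * ((x.2.1 - x.1) * x.2.2.1 - 1))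
    (fun _ _ => Nat.zero_le _) hx

lemma fin_Fn (d n : ℕ) : {D : Xq →₀ ℕ | (D.support : Set Xq) ⊆ Td d ∧ cogD D = n}.Finite := by
  set B : Finset Xq := Finset.range (d+2) ×ˢ Finset.range (d+2) ×ˢ Finset.range (n+2) ×ˢ Finset.range (d+2)
  apply (Set.finite_Icc (0 : Xq →₀ ℕ) (Finsupp.indicator B (fun _ _ => n))).subset
  rintro D ⟨hD, hc⟩
  refine ⟨zero_le, ?_⟩
  intro x
  by_cases hx : x ∈ D.support
  · obtain ⟨hv, h1, h2⟩ := hD hx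
    obtain ⟨t1, t2⟩ := two_le x hv
    have hn : 1 ≤ D x := Nat.one_le_iff_ne_zero.mpr (Finsupp.mem_support_iff.mp hx)
    have ht := cog_term D x hx
    rw [hc] at ht
    have h3 : (x.2.1 - x.1) * x.2.2.1 - 1 ≤ n := le_trans (Nat.le_mul_of_pos_left _ hn) ht
    have h4 : D x ≤ n := le_trans (Nat.le_mul_of_pos_right _ (by omega)) ht
    obtain ⟨v1, v2, v3, v4⟩ := hv
    have hB : x ∈ B := by
      simp only [B, Finset.mem_product, Finset.mem_range]
      omega
    rw [Finsupp.indicator_of_mem hB]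
    exact h4
  · rw [Finsupp.notMem_support_iff.mp hx]; exact Nat.zero_le _

noncomputable def Fn (d n : ℕ) : Finset (Xq →₀ ℕ) := (fin_Fn d n).toFinset

lemma mem_Fn (d n : ℕ) (D : Xq →₀ ℕ) :
    D ∈ Fn d n ↔ (D.support : Set Xq) ⊆ Td d ∧ cogD D = n := by
  unfold Fn
  rw [Set.Finite.mem_toFinset]; rfl

noncomputable def opF (d : ℕ) (φ : Ser) : PowerSeries ℚ :=
  PowerSeries.mk fun n => ∑ D ∈ Fn d n, MvPowerSeries.coeff D φ

lemma opF_mul (d : ℕ) (φ ψ : Ser) : opF d (φ * ψ) = opF d φ * opF d ψ := by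
  ext n
  unfold opF
  rw [PowerSeries.coeff_mul]
  simp only [PowerSeries.coeff_mk, MvPowerSeries.coeff_mul, Finset.sum_mul_sum, ← Finset.sum_product']
  rw [Finset.sum_sigma', Finset.sum_sigma']
  refine Finset.sum_bij' (fun z _ => ⟨(cogD z.2.1, cogD z.2.2), z.2⟩)
    (fun z _ => ⟨z.2.1 + z.2.2, z.2⟩) ?_ ?_ ?_ ?_ ?_
  · rintro ⟨D, p⟩ h
    simp only [Finset.mem_sigma, mem_Fn, Finset.HasAntidiagonal.mem_antidiagonal, Finset.mem_product] at h ⊢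
    obtain ⟨⟨h1, h2⟩, h3⟩ := h
    rw [← h3, supp_add] at h1
    rw [← h3, cogD_add] at h2
    exact ⟨h2, ⟨h1.1, trivial⟩, h1.2, trivial⟩
  · rintro ⟨q, p⟩ h
    simp only [Finset.mem_sigma, mem_Fn, Finset.HasAntidiagonal.mem_antidiagonal, Finset.mem_product] at h ⊢
    obtain ⟨h1, ⟨h2, h3⟩, h4, h5⟩ := h
    refine ⟨⟨(supp_add _ _ _).mpr ⟨h2, h4⟩, ?_⟩, trivial⟩
    rw [cogD_add]; omega
  · rintro ⟨D, p⟩ h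
    simp only [Finset.mem_sigma, Finset.HasAntidiagonal.mem_antidiagonal] at h
    simp only [h.2]
  · rintro ⟨q, p⟩ h
    simp only [Finset.mem_sigma, mem_Fn, Finset.mem_product] at h
    obtain ⟨h1, ⟨h2, h3⟩, h4, h5⟩ := h
    simp only [h3, h5]
  · rintro ⟨D, p⟩ h
    rfl

lemma opF_opE (d : ℕ) (φ : Ser) :
    opF d (opE φ) = PowerSeries.X * PowerSeries.derivative ℚ (opF d φ) := by
  ext n
  have h : PowerSeries.coeff n (opF d (opE φ)) = n * PowerSeries.coeff n (opF d φ) := by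
    unfold opF
    rw [PowerSeries.coeff_mk, PowerSeries.coeff_mk, Finset.mul_sum]
    apply Finset.sum_congr rfl
    intro D hD
    rw [coeff_opE, ((mem_Fn _ _ _).mp hD).2]
  rw [h]
  rcases n with _ | n
  · simp
  · rw [PowerSeries.coeff_succ_X_mul, PowerSeries.coeff_derivative]; push_cast; ring

lemma Nd_eq (d : ℕ) (D : Xq →₀ ℕ) (hD : (D.support : Set Xq) ⊆ Td d) :
    Nd d D = MvPowerSeries.coeff D Zf := by
  rw [coeff_Zf]
  unfold Nd
  have h1 : IsEncoding D := fun x hx => (hD hx).1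
  have h2 : AllowD d D ↔ (IsEncoding D ∧ ∀ j, wjD D j ≤ j) := by
    unfold AllowD
    constructor
    · exact fun h => ⟨h1, h.2.2⟩
    · exact fun h => ⟨fun x hx => (hD hx).2.1, fun x hx => (hD hx).2.2, h.2⟩
  simp only [h2]
  rfl

lemma opF_Zf (d : ℕ) : opF d Zf = PowerSeries.mk (NSev d) := by
  ext n
  unfold opF NSev
  rw [PowerSeries.coeff_mk, PowerSeries.coeff_mk]
  split_ifs with hn
  · subst hn
    have : Fn d 0 = {0} := by
      ext D
      rw [mem_Fn, Finset.mem_singleton]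
      constructor
      · rintro ⟨h1, h2⟩
        by_contra hD
        obtain ⟨x, hx⟩ := Finsupp.support_nonempty_iff.mpr hD
        have ht := cog_term D x hx
        have := (two_le x (h1 hx).1).1
        have hn : 1 ≤ D x := Nat.one_le_iff_ne_zero.mpr (Finsupp.mem_support_iff.mp hx)
        have h3 : (x.2.1 - x.1) * x.2.2.1 - 1 ≤ cogD D := le_trans (Nat.le_mul_of_pos_left _ hn) ht
        omega
      · rintro rfl
        exact ⟨by simp, zeros.1⟩
    rw [this, Finset.sum_singleton]
    exact Zf_one0
  · have h : ∀ D : Xq →₀ ℕ, (∑ᶠ (_ : IsEncoding D ∧ cogD D = n), Nd d D) =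
        if D ∈ Fn d n then MvPowerSeries.coeff D Zf else 0 := by
      intro D
      rw [finsum_eq_if]
      by_cases hD : D ∈ Fn d n
      · have hD' := (mem_Fn _ _ _).mp hD
        rw [if_pos hD, if_pos ⟨fun x hx => (hD'.1 hx).1, hD'.2⟩, Nd_eq d D hD'.1]
      · rw [if_neg hD]
        split_ifs with h
        · unfold Nd
          rw [if_neg]
          rintro ⟨h1, h2, h3⟩
          exact hD ((mem_Fn _ _ _).mpr ⟨fun x hx => ⟨h.1 x hx, h1 x hx, h2 x hx⟩, h.2⟩)
        · rfl
    rw [finsum_congr h, finsum_eq_sum_of_support_subset (s := Fn d n)]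
    · apply Finset.sum_congr rfl
      intro D hD
      rw [if_pos hD]
    · intro D hD
      by_contra hh
      exact hD (if_neg hh)

lemma Q_sum (d δ : ℕ) (hδ : 0 < δ) :
    (δ : ℚ) * QSev d δ = ∑ D ∈ Fn d δ, MvPowerSeries.coeff D (opG Zf) := by
  rw [Q_eq d δ hδ (opF d (opG Zf))]
  · unfold opF; rw [PowerSeries.coeff_mk]
  · rw [← opF_Zf, ← opF_mul, opG_mul_self Zf_one0, opF_opE]

noncomputable def Cd (δ d : ℕ) : Finset (Xq →₀ ℕ) :=
  (Fn (d+1) δ \ Fn d δ).filter (fun D => ∀ x ∈ D.support, d ≤ x.1 + δ)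

lemma Td_mono (d : ℕ) : Td d ⊆ Td (d + 1) := by
  rintro x ⟨h1, h2, h3⟩
  exact ⟨h1, by omega, fun h => by omega⟩

lemma Q_diff (d δ : ℕ) (hδ : 0 < δ) :
    (δ : ℚ) * QSev (d+1) δ - δ * QSev d δ = ∑ D ∈ Cd δ d, MvPowerSeries.coeff D (opG Zf) := by
  rw [Q_sum _ _ hδ, Q_sum _ _ hδ]
  have hsub : Fn d δ ⊆ Fn (d+1) δ := by
    intro D hD
    rw [mem_Fn] at hD ⊢
    exact ⟨hD.1.trans (Td_mono d), hD.2⟩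
  rw [← Finset.sum_sdiff hsub, add_sub_cancel_right]
  symm
  apply Finset.sum_subset (Finset.filter_subset _ _)
  intro D hD hD'
  by_contra hg
  apply hD'
  refine Finset.mem_filter.mpr ⟨hD, ?_⟩
  rw [Finset.mem_sdiff, mem_Fn, mem_Fn] at hD
  obtain ⟨⟨h1, h2⟩, h3⟩ := hD
  have : ∃ x ∈ D.support, x ∉ Td d := by
    by_contra hcon
    push Not at hcon
    exact h3 ⟨hcon, h2⟩
  obtain ⟨x, hx, hxT⟩ := this
  have hxb : d + 1 ≤ x.2.1 := by
    by_contra hlt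
    exact hxT ⟨(h1 hx).1, by omega, by omega⟩
  intro y hy
  have := g_span D (fun z hz => (h1 hz).1) hg y x hy hx
  omega

lemma sk_Td (k d : ℕ) (x : Xq) : sk k x ∈ Td (d + k) ↔ x ∈ Td d := by
  have : ∀ x d, x ∈ Td d ↔ ValidX x ∧ x.2.1 ≤ d + 1 ∧ (x.2.1 = d + 1 → x.2.2.1 = 1) :=
    fun _ _ => Iff.rfl
  rw [this, this, sk_valid]
  simp only [sk]
  constructor <;> (rintro ⟨h1, h2, h3⟩; exact ⟨h1, by omega, fun h => h3 (by omega)⟩)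

lemma sk_Fn (k d n : ℕ) (D : Xq →₀ ℕ) : D.mapDomain (sk k) ∈ Fn (d + k) n ↔ D ∈ Fn d n := by
  rw [mem_Fn, mem_Fn, sk_cog, sk_supp]
  have : ((D.support.image (sk k) : Finset Xq) : Set Xq) ⊆ Td (d + k) ↔
      (D.support : Set Xq) ⊆ Td d := by
    rw [Finset.coe_image, Set.image_subset_iff]
    constructor
    · intro h x hx
      exact (sk_Td k d x).mp (h hx)
    · intro h x hx
      exact (sk_Td k d x).mpr (h hx)
  rw [this]

lemma Cd_shift (δ d k : ℕ) (hd : δ ≤ d) :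
    Cd δ (d + k) = (Cd δ d).image (fun D => D.mapDomain (sk k)) := by
  have hiff : ∀ D : Xq →₀ ℕ, D.mapDomain (sk k) ∈ Cd δ (d + k) ↔ D ∈ Cd δ d := by
    intro D
    unfold Cd
    rw [Finset.mem_filter, Finset.mem_filter, Finset.mem_sdiff, Finset.mem_sdiff,
      show d + k + 1 = (d + 1) + k by omega, sk_Fn, sk_Fn, sk_supp]
    simp only [Finset.forall_mem_image, sk]
    refine and_congr Iff.rfl (forall₂_congr fun x _ => ?_)
    omega
  ext D
  rw [Finset.mem_image]
  constructor
  · intro hD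
    have e : (D.comapDomain (sk k) (sk_inj k).injOn).mapDomain (sk k) = D := by
      apply Finsupp.mapDomain_comapDomain _ (sk_inj k)
      intro x hx
      unfold Cd at hD
      rw [Finset.mem_filter, Finset.mem_sdiff, mem_Fn] at hD
      have h1 := hD.2 x hx
      obtain ⟨v1, v2, _⟩ := (hD.1.1.1 hx).1
      refine ⟨(x.1 - k, x.2.1 - k, x.2.2.1, x.2.2.2 - k), ?_⟩
      obtain ⟨a, b, w, i⟩ := x
      change d + k ≤ a + δ at h1
      change a ≤ i at v1
      change i < b at v2
      change (a - k + k, b - k + k, w, i - k + k) = (a, b, w, i)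
      rw [Nat.sub_add_cancel (by omega), Nat.sub_add_cancel (by omega), Nat.sub_add_cancel (by omega)]
    refine ⟨_, ?_, e⟩
    rw [← hiff, e]
    exact hD
  · rintro ⟨D', h, rfl⟩
    exact (hiff D').mpr h

lemma wj_le (D : Xq →₀ ℕ) (hD : IsEncoding D) (j : ℕ) : wjD D j ≤ 2 * cogD D := by
  unfold wjD cogD
  rw [Finset.mul_sum]
  refine (Finset.sum_le_sum_of_subset (Finset.filter_subset _ _)).trans ?_
  apply Finset.sum_le_sum
  intro x hx
  obtain ⟨t1, t2⟩ := two_le x (hD x hx)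
  have : x.2.2.1 ≤ 2 * ((x.2.1 - x.1) * x.2.2.1 - 1) := by omega
  calc x.2.2.1 * D x ≤ (2 * ((x.2.1 - x.1) * x.2.2.1 - 1)) * D x := Nat.mul_le_mul_right _ this
    _ = _ := by ring

lemma Cd_w (δ d : ℕ) (hd : 3 * δ ≤ d) (D : Xq →₀ ℕ) (h : D ∈ Cd δ d) :
    IsEncoding D ∧ ∀ j, wjD D j ≤ j := by
  unfold Cd at h
  rw [Finset.mem_filter, Finset.mem_sdiff, mem_Fn] at h
  obtain ⟨⟨⟨h1, h2⟩, _⟩, h3⟩ := h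
  have he : IsEncoding D := fun x hx => (h1 hx).1
  refine ⟨he, fun j => ?_⟩
  by_cases hj : ∀ x ∈ D.support, ¬ (x.1 ≤ j ∧ j < x.2.1)
  · rw [wjD_zero_of D j hj]; omega
  · push Not at hj
    obtain ⟨x, hx, hx1, _⟩ := hj
    have := wj_le D he j
    have := h3 x hx
    omega

/-- For each positive `δ`, `Q^{d,δ}` is quadratic in `d` for `d` sufficiently large. -/
theorem QSev_quadratic (δ : ℕ) (hδ : 0 < δ) :
    ∃ (a b c : ℚ) (d₀ : ℕ), ∀ d : ℕ, d₀ ≤ d →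
      QSev d δ = a * (d : ℚ) ^ 2 + b * (d : ℚ) + c := by
  set d₀ := 3 * δ with hd₀
  have haff : ∀ D : Xq →₀ ℕ, ∃ u v : ℚ, D ∈ Cd δ d₀ → ∀ k : ℕ,
      MvPowerSeries.coeff (D.mapDomain (sk k)) (opG Zf) = u + k * v := by
    intro D
    by_cases h : D ∈ Cd δ d₀
    · obtain ⟨h1, h2⟩ := Cd_w δ d₀ le_rfl D h
      obtain ⟨u, v, huv⟩ := g_affine D h1 h2
      exact ⟨u, v, fun _ => huv⟩
    · exact ⟨0, 0, fun h' => absurd h' h⟩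
  choose u v huv using haff
  set U := ∑ D ∈ Cd δ d₀, u D
  set V := ∑ D ∈ Cd δ d₀, v D
  have hstep : ∀ k : ℕ, (δ : ℚ) * QSev (d₀ + k + 1) δ - δ * QSev (d₀ + k) δ = U + k * V := by
    intro k
    rw [Q_diff _ _ hδ, Cd_shift δ d₀ k (by omega), Finset.sum_image, Finset.mul_sum,
      ← Finset.sum_add_distrib]
    · exact Finset.sum_congr rfl fun D hD => huv D hD k
    · intro a _ b _ h
      exact Finsupp.mapDomain_injective (sk_inj k) h
  have hδ' : (δ : ℚ) ≠ 0 := by positivity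
  have hsum : ∀ k : ℕ, (δ : ℚ) * QSev (d₀ + k) δ =
      δ * QSev d₀ δ + k * U + (k^2 - k) / 2 * V := by
    intro k
    induction k with
    | zero => simp
    | succ k ih =>
      have := hstep k
      rw [← add_assoc]
      push_cast
      linear_combination this + ih
  refine ⟨V / 2 / δ, (U - V / 2 - d₀ * V) / δ,
    (δ * QSev d₀ δ - d₀ * U + ((d₀ : ℚ)^2 + d₀) / 2 * V) / δ, d₀, ?_⟩
  intro d hd
  obtain ⟨k, rfl⟩ := Nat.exists_eq_add_of_le hd
  have h := hsum k
  have h' : QSev (d₀ + k) δ = (δ * QSev d₀ δ + k * U + (k^2 - k) / 2 * V) / δ := by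
    rw [← h]; field_simp
  rw [h']
  push_cast
  field_simp
  ring
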